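/- Let E be a real Banach space, c > 0, and S : E × E → E a symmetric continuous bilinear map satisfying ‖S(u,v)‖ ≤ c‖u‖·‖v‖ for all u, v ∈ E. Let η ∈ E and let C > 0 be a constant with C‖η‖ < 1 and 2c/(1 − C‖η‖) ≤ C. Define f₀ = 0, f₁ = η, f_{k+1} = S(f_k, f_k) + η for k ≥ 1, and set g_k = f_k − f_{k-1}. Then for every k ≥ 1 one has ‖g_k‖ ≤ C^{k-1}‖η‖^k. -/

import Mathlib

/-- Proposition 4.12 stated abstractly: the increments `g_k = f_k − f_{k-1}` of the
iteration `f₀ = 0`, `f₁ = η`, `f_{k+1} = S(f_k, f_k) + η` satisfy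
`‖g_k‖ ≤ C^{k-1}‖η‖^k` provided `C‖η‖ < 1` and `2c/(1 − C‖η‖) ≤ C`. -/
theorem stmt_4 {E : Type*} [NormedAddCommGroup E] [NormedSpace ℝ E]
    (c : ℝ) (hc : 0 < c) (S : E →L[ℝ] E →L[ℝ] E)
    (hsymm : ∀ u v : E, S u v = S v u)
    (hbound : ∀ u v : E, ‖S u v‖ ≤ c * ‖u‖ * ‖v‖)
    (η : E) (C : ℝ) (hC : 0 < C) (hCη : C * ‖η‖ < 1)
    (hCc : 2 * c / (1 - C * ‖η‖) ≤ C)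
    (f : ℕ → E) (hf0 : f 0 = 0) (hf1 : f 1 = η)
    (hfrec : ∀ k : ℕ, 1 ≤ k → f (k + 1) = S (f k) (f k) + η)
    (g : ℕ → E) (hg : ∀ k : ℕ, 1 ≤ k → g k = f k - f (k - 1)) :
    ∀ k : ℕ, 1 ≤ k → ‖g k‖ ≤ C ^ (k - 1) * ‖η‖ ^ k := by
  have hd : 0 < 1 - C * ‖η‖ := by linarith
  have hx : 0 ≤ ‖η‖ := norm_nonneg η
  have h2c : 2 * c ≤ C * (1 - C * ‖η‖) := (div_le_iff₀ hd).1 hCc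
  obtain ⟨M, hM⟩ : ∃ M : ℝ, M = ‖η‖ / (1 - C * ‖η‖) := ⟨_, rfl⟩
  have hM0 : 0 ≤ M := by rw [hM]; positivity
  have hMx : M * (1 - C * ‖η‖) = ‖η‖ := by rw [hM]; exact div_mul_cancel₀ _ hd.ne'
  have h2cM : 2 * c * M ≤ C * ‖η‖ := by
    calc 2 * c * M ≤ C * (1 - C * ‖η‖) * M := mul_le_mul_of_nonneg_right h2c hM0
      _ = C * (M * (1 - C * ‖η‖)) := by ring
      _ = C * ‖η‖ := by rw [hMx]
  have hrec : ∀ k : ℕ, f (k + 1) = S (f k) (f k) + η := by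
    intro k
    rcases Nat.eq_zero_or_pos k with h | h
    · subst h; simp [hf0, hf1]
    · exact hfrec k h
  have hfM : ∀ k : ℕ, ‖f k‖ ≤ M := by
    intro k
    induction k with
    | zero => simpa [hf0] using hM0
    | succ k ih =>
      rw [hrec k]
      have h1 : ‖S (f k) (f k)‖ ≤ c * M * M := by
        refine (hbound _ _).trans ?_
        gcongr
      have h2 := norm_add_le (S (f k) (f k)) η
      have h3 : 2 * c * M * M ≤ C * ‖η‖ * M := mul_le_mul_of_nonneg_right h2cM hM0
      have h4 : 0 ≤ c * M * M := by positivity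
      nlinarith
  intro k hk
  induction k, hk using Nat.le_induction with
  | base => simp [hg 1 le_rfl, hf0, hf1]
  | succ k hk ih =>
    obtain ⟨m, rfl⟩ : ∃ m, k = m + 1 := ⟨k - 1, by omega⟩
    have e : g (m + 1 + 1) = S (f (m + 1)) (g (m + 1)) + S (g (m + 1)) (f m) := by
      rw [hg (m + 1 + 1) (by omega), hg (m + 1) (by omega)]
      simp only [Nat.add_sub_cancel]
      rw [hrec (m + 1)]
      nth_rewrite 3 [hrec m]
      simp only [map_sub, sub_apply]
      abel
    have h1 : ‖S (f (m + 1)) (g (m + 1))‖ ≤ c * M * ‖g (m + 1)‖ := by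
      refine (hbound _ _).trans ?_
      gcongr
      exact hfM _
    have h2 : ‖S (g (m + 1)) (f m)‖ ≤ c * M * ‖g (m + 1)‖ := by
      rw [hsymm]
      refine (hbound _ _).trans ?_
      gcongr
      exact hfM _
    simp only [Nat.add_sub_cancel] at ih ⊢
    calc ‖g (m + 1 + 1)‖ ≤ 2 * c * M * ‖g (m + 1)‖ := by
          rw [e]; refine (norm_add_le _ _).trans ?_; linarith
      _ ≤ C * ‖η‖ * (C ^ m * ‖η‖ ^ (m + 1)) := by gcongr
      _ = C ^ (m + 1) * ‖η‖ ^ (m + 1 + 1) := by ring
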